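/- Assume 3 ≤ a ≤ b and t = p − 1, and let x* = (p − (a + b − 5/2))/(ηp − (16p − 14a − 14b + 20)). Let s be a block array in which exactly p − 1 distinct treatments occur (so exactly one treatment occurs twice and all others occur once) and every treatment is connected in s, but s ∉ Q₁; and let s* be any block array in Q₁. Then q_{s*}(x*) > q_s(x*). -/

import Mathlib

open Matrix

namespace TwoDim

/-- The set of plots of an `a × b` block. -/
abbrev Plot (a b : ℕ) := Fin a × Fin b

/-- A block array: an assignment of one of `t` treatments to each plot. -/
abbrev BlockArray (a b t : ℕ) := Plot a b → Fin t

/-- The all-ones matrix. -/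
def Jmat (n : Type*) : Matrix n n ℝ := Matrix.of fun _ _ => 1

/-- `B_m = I - J/m`. -/
noncomputable def Bmat (n : Type*) [Fintype n] [DecidableEq n] : Matrix n n ℝ :=
  1 - ((Fintype.card n : ℝ))⁻¹ • Jmat n

variable {a b t : ℕ}

/-- The treatment incidence matrix `T_s`. -/
def Tmat (s : BlockArray a b t) : Matrix (Plot a b) (Fin t) ℝ :=
  Matrix.of fun q k => if s q = k then 1 else 0

/-- Two plots are neighbors if they agree in one coordinate and differ by 1 in the other. -/
def Neighbor (q r : Plot a b) : Prop :=
  (q.1 = r.1 ∧ (q.2.val + 1 = r.2.val ∨ r.2.val + 1 = q.2.val)) ∨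
  (q.2 = r.2 ∧ (q.1.val + 1 = r.1.val ∨ r.1.val + 1 = q.1.val))

instance (q r : Plot a b) : Decidable (Neighbor q r) := by
  unfold Neighbor; infer_instance

/-- The adjacency matrix of the neighbor relation. -/
def Mmat (a b : ℕ) : Matrix (Plot a b) (Plot a b) ℝ :=
  Matrix.of fun q r => if Neighbor q r then 1 else 0

/-- `F_s = M T_s`. -/
def Fmat (s : BlockArray a b t) : Matrix (Plot a b) (Fin t) ℝ :=
  Mmat a b * Tmat s

/-- `B̃ = Σ⁻¹ − Σ⁻¹ J Σ⁻¹ / (1'Σ⁻¹1)`. -/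
noncomputable def Btilde (Sig : Matrix (Plot a b) (Plot a b) ℝ) :
    Matrix (Plot a b) (Plot a b) ℝ :=
  Sig⁻¹ - (∑ i, ∑ j, Sig⁻¹ i j)⁻¹ • (Sig⁻¹ * Jmat (Plot a b) * Sig⁻¹)

/-- `C_{s00} = T_s' W T_s` (with `W` playing the role of `B̃`). -/
def Cs00 (W : Matrix (Plot a b) (Plot a b) ℝ) (s : BlockArray a b t) :
    Matrix (Fin t) (Fin t) ℝ := (Tmat s)ᵀ * W * Tmat s

/-- `C_{s01} = T_s' W F_s`. -/
def Cs01 (W : Matrix (Plot a b) (Plot a b) ℝ) (s : BlockArray a b t) :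
    Matrix (Fin t) (Fin t) ℝ := (Tmat s)ᵀ * W * Fmat s

/-- `C_{s11} = F_s' W F_s`. -/
def Cs11 (W : Matrix (Plot a b) (Plot a b) ℝ) (s : BlockArray a b t) :
    Matrix (Fin t) (Fin t) ℝ := (Fmat s)ᵀ * W * Fmat s

/-- `c_{s00} = tr(B_t C_{s00})`. -/
noncomputable def cs00 (W : Matrix (Plot a b) (Plot a b) ℝ) (s : BlockArray a b t) : ℝ :=
  Matrix.trace (Bmat (Fin t) * Cs00 W s)

noncomputable def cs01 (W : Matrix (Plot a b) (Plot a b) ℝ) (s : BlockArray a b t) : ℝ :=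
  Matrix.trace (Bmat (Fin t) * Cs01 W s)

noncomputable def cs11 (W : Matrix (Plot a b) (Plot a b) ℝ) (s : BlockArray a b t) : ℝ :=
  Matrix.trace (Bmat (Fin t) * Cs11 W s)

/-- The quadratic `q_s(x) = c_{s00} + 2 c_{s01} x + c_{s11} x²`. -/
noncomputable def qpoly (W : Matrix (Plot a b) (Plot a b) ℝ) (s : BlockArray a b t) (x : ℝ) : ℝ :=
  cs00 W s + 2 * cs01 W s * x + cs11 W s * x ^ 2

/-- A measure on the set of block arrays: nonnegative weights summing to one. -/
def IsMeasure (ξ : BlockArray a b t → ℝ) : Prop :=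
  (∀ s, 0 ≤ ξ s) ∧ ∑ s, ξ s = 1

noncomputable def Cm00 (W : Matrix (Plot a b) (Plot a b) ℝ) (ξ : BlockArray a b t → ℝ) :
    Matrix (Fin t) (Fin t) ℝ := ∑ s, ξ s • Cs00 W s

noncomputable def Cm01 (W : Matrix (Plot a b) (Plot a b) ℝ) (ξ : BlockArray a b t → ℝ) :
    Matrix (Fin t) (Fin t) ℝ := ∑ s, ξ s • Cs01 W s

noncomputable def Cm11 (W : Matrix (Plot a b) (Plot a b) ℝ) (ξ : BlockArray a b t → ℝ) :
    Matrix (Fin t) (Fin t) ℝ := ∑ s, ξ s • Cs11 W s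

noncomputable def cm00 (W : Matrix (Plot a b) (Plot a b) ℝ) (ξ : BlockArray a b t → ℝ) : ℝ :=
  ∑ s, ξ s * cs00 W s

noncomputable def cm01 (W : Matrix (Plot a b) (Plot a b) ℝ) (ξ : BlockArray a b t → ℝ) : ℝ :=
  ∑ s, ξ s * cs01 W s

noncomputable def cm11 (W : Matrix (Plot a b) (Plot a b) ℝ) (ξ : BlockArray a b t → ℝ) : ℝ :=
  ∑ s, ξ s * cs11 W s

/-- `q*_ξ = c_{ξ00} − c_{ξ01}²/c_{ξ11}`. -/
noncomputable def qstar (W : Matrix (Plot a b) (Plot a b) ℝ) (ξ : BlockArray a b t → ℝ) : ℝ :=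
  cm00 W ξ - (cm01 W ξ) ^ 2 / cm11 W ξ

/-- `G` is a generalized inverse of `A`. -/
def IsGenInv (A G : Matrix (Fin t) (Fin t) ℝ) : Prop := A * G * A = A

/-- Information matrix `C_{ξ00} − C_{ξ01} G C_{ξ10}` computed with a generalized inverse `G`. -/
noncomputable def InfoMat (W : Matrix (Plot a b) (Plot a b) ℝ) (ξ : BlockArray a b t → ℝ)
    (G : Matrix (Fin t) (Fin t) ℝ) : Matrix (Fin t) (Fin t) ℝ :=
  Cm00 W ξ - Cm01 W ξ * G * (Cm01 W ξ)ᵀ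

/-- A criterion `Φ` on `t×t` real symmetric matrices: concave, Loewner-nondecreasing, and
invariant under simultaneous permutations of rows and columns. -/
def GoodPhi (t : ℕ) (Φ : Matrix (Fin t) (Fin t) ℝ → ℝ) : Prop :=
  (∀ A B : Matrix (Fin t) (Fin t) ℝ, A.IsSymm → B.IsSymm → ∀ α : ℝ, 0 ≤ α → α ≤ 1 →
      α * Φ A + (1 - α) * Φ B ≤ Φ (α • A + (1 - α) • B)) ∧
  (∀ A B : Matrix (Fin t) (Fin t) ℝ, A.IsSymm → B.IsSymm → (B - A).PosSemidef → Φ A ≤ Φ B) ∧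
  (∀ (σ : Equiv.Perm (Fin t)) (C : Matrix (Fin t) (Fin t) ℝ), Φ (C.submatrix σ σ) = Φ C)

/-- Universal optimality of a measure `ξ`. -/
def UnivOptimal (W : Matrix (Plot a b) (Plot a b) ℝ) (ξ : BlockArray a b t → ℝ) : Prop :=
  ∀ η : BlockArray a b t → ℝ, IsMeasure η →
    ∀ G H : Matrix (Fin t) (Fin t) ℝ, IsGenInv (Cm11 W ξ) G → IsGenInv (Cm11 W η) H →
      ∀ Φ : Matrix (Fin t) (Fin t) ℝ → ℝ, GoodPhi t Φ →
        Φ (InfoMat W η H) ≤ Φ (InfoMat W ξ G)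

/-- A measure is symmetric if it is invariant under relabeling of the treatments. -/
def IsSymmetricMeasure (ξ : BlockArray a b t → ℝ) : Prop :=
  ∀ (σ : Equiv.Perm (Fin t)) (s : BlockArray a b t), ξ (fun q => σ (s q)) = ξ s

/-- A matrix is completely symmetric if it is of the form `αI + βJ`. -/
def ComplSym (A : Matrix (Fin t) (Fin t) ℝ) : Prop :=
  ∃ α β : ℝ, A = α • (1 : Matrix (Fin t) (Fin t) ℝ) + β • Jmat (Fin t)

/-- A measure is pseudo symmetric if `C_{ξ00}`, `C_{ξ01}`, `C_{ξ11}` are completely symmetric. -/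
def PseudoSym (W : Matrix (Plot a b) (Plot a b) ℝ) (ξ : BlockArray a b t → ℝ) : Prop :=
  ComplSym (Cm00 W ξ) ∧ ComplSym (Cm01 W ξ) ∧ ComplSym (Cm11 W ξ)

/-- `r(x) = max_{s∈S} q_s(x)`. -/
noncomputable def rfun {a b : ℕ} (t : ℕ) (W : Matrix (Plot a b) (Plot a b) ℝ) (x : ℝ) : ℝ :=
  sSup (Set.range fun s : BlockArray a b t => qpoly W s x)

/-- `min_{s∈S} q_s(x)`. -/
noncomputable def rmin {a b : ℕ} (t : ℕ) (W : Matrix (Plot a b) (Plot a b) ℝ) (x : ℝ) : ℝ :=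
  sInf (Set.range fun s : BlockArray a b t => qpoly W s x)

/-- Number of plots assigned treatment `k` by `s`. -/
noncomputable def f0 (s : BlockArray a b t) (k : Fin t) : ℕ :=
  {q : Plot a b | s q = k}.ncard

/-- Replications of `k` among the columns `1,…,b−1`. -/
noncomputable def f1 (s : BlockArray a b t) (k : Fin t) : ℕ :=
  {q : Plot a b | s q = k ∧ q.2.val + 1 < b}.ncard

/-- Replications of `k` among the columns `2,…,b`. -/
noncomputable def f2 (s : BlockArray a b t) (k : Fin t) : ℕ :=
  {q : Plot a b | s q = k ∧ 1 ≤ q.2.val}.ncard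

/-- Replications of `k` among the rows `1,…,a−1`. -/
noncomputable def f3 (s : BlockArray a b t) (k : Fin t) : ℕ :=
  {q : Plot a b | s q = k ∧ q.1.val + 1 < a}.ncard

/-- Replications of `k` among the rows `2,…,a`. -/
noncomputable def f4 (s : BlockArray a b t) (k : Fin t) : ℕ :=
  {q : Plot a b | s q = k ∧ 1 ≤ q.1.val}.ncard

noncomputable def fc (s : BlockArray a b t) : ℕ → Fin t → ℕ
  | 0 => f0 s
  | 1 => f1 s
  | 2 => f2 s
  | 3 => f3 s
  | 4 => f4 s
  | _ => fun _ => 0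

/-- `h^{uv}_s = Σ_k f^u_{s,k} f^v_{s,k}`. -/
noncomputable def hval (s : BlockArray a b t) (u v : ℕ) : ℝ :=
  ∑ k : Fin t, (fc s u k : ℝ) * (fc s v k : ℝ)

noncomputable def h00 (s : BlockArray a b t) : ℝ := hval s 0 0

noncomputable def h1 (s : BlockArray a b t) : ℝ :=
  hval s 0 1 + hval s 0 2 + hval s 0 3 + hval s 0 4

noncomputable def h2 (s : BlockArray a b t) : ℝ :=
  hval s 1 1 + hval s 2 2 + hval s 3 3 + hval s 4 4

noncomputable def h3 (s : BlockArray a b t) : ℝ :=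
  hval s 1 2 + hval s 1 3 + hval s 1 4 + hval s 2 3 + hval s 2 4 + hval s 3 4

/-- `z¹_{s,r}`: horizontally adjacent pairs of plots receiving the same treatment. -/
noncomputable def zr1 (s : BlockArray a b t) : ℕ :=
  {qr : Plot a b × Plot a b |
    qr.1.1 = qr.2.1 ∧ qr.1.2.val + 1 = qr.2.2.val ∧ s qr.1 = s qr.2}.ncard

noncomputable def zr2 (s : BlockArray a b t) : ℕ :=
  {qr : Plot a b × Plot a b |
    qr.1.1 = qr.2.1 ∧ qr.1.2.val + 2 = qr.2.2.val ∧ s qr.1 = s qr.2}.ncard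

noncomputable def zc1 (s : BlockArray a b t) : ℕ :=
  {qr : Plot a b × Plot a b |
    qr.1.2 = qr.2.2 ∧ qr.1.1.val + 1 = qr.2.1.val ∧ s qr.1 = s qr.2}.ncard

noncomputable def zc2 (s : BlockArray a b t) : ℕ :=
  {qr : Plot a b × Plot a b |
    qr.1.2 = qr.2.2 ∧ qr.1.1.val + 2 = qr.2.1.val ∧ s qr.1 = s qr.2}.ncard

/-- pairs `(i,j)`, `(i−1,j+1)` with the same treatment. -/
noncomputable def zd1 (s : BlockArray a b t) : ℕ :=
  {qr : Plot a b × Plot a b |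
    qr.2.1.val + 1 = qr.1.1.val ∧ qr.1.2.val + 1 = qr.2.2.val ∧ s qr.1 = s qr.2}.ncard

/-- pairs `(i,j)`, `(i+1,j+1)` with the same treatment. -/
noncomputable def zd2 (s : BlockArray a b t) : ℕ :=
  {qr : Plot a b × Plot a b |
    qr.1.1.val + 1 = qr.2.1.val ∧ qr.1.2.val + 1 = qr.2.2.val ∧ s qr.1 = s qr.2}.ncard

noncomputable def z1 (s : BlockArray a b t) : ℝ := 2 * zr1 s + 2 * zc1 s

noncomputable def z2 (s : BlockArray a b t) : ℝ :=
  2 * zr2 s + 2 * zc2 s + 4 * zd1 s + 4 * zd2 s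

/-- `η = 4p − 2a − 2b − 2(8ab − 7a − 7b + 4)/t + 4(2p − a − b)²/(pt)` where `p = ab`. -/
noncomputable def eta (a b t : ℕ) : ℝ :=
  4 * ((a : ℝ) * b) - 2 * a - 2 * b - 2 * (8 * (a : ℝ) * b - 7 * a - 7 * b + 4) / t +
    4 * (2 * (a : ℝ) * b - a - b) ^ 2 / (((a : ℝ) * b) * t)

/-- A corner plot of the `a × b` block. -/
def IsCorner (q : Plot a b) : Prop :=
  (q.1.val = 0 ∨ q.1.val + 1 = a) ∧ (q.2.val = 0 ∨ q.2.val + 1 = b)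

/-- Treatment `k` is significant in `s`: it occupies exactly two plots, which are
neighbors, at least one of them being a corner plot. -/
def Significant (s : BlockArray a b t) (k : Fin t) : Prop :=
  ∃ u v : Plot a b, u ≠ v ∧ {q : Plot a b | s q = k} = {u, v} ∧
    Neighbor u v ∧ (IsCorner u ∨ IsCorner v)

/-- Treatment `k` is strictly significant in `s`: both of its two plots are corners. -/
def StrictSignificant (s : BlockArray a b t) (k : Fin t) : Prop :=
  ∃ u v : Plot a b, u ≠ v ∧ {q : Plot a b | s q = k} = {u, v} ∧
    Neighbor u v ∧ IsCorner u ∧ IsCorner v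

/-- `Q_i`: block arrays with exactly `i` significant treatments in which every other
treatment appears at most once. -/
def Qset (a b t : ℕ) (i : ℕ) : Set (BlockArray a b t) :=
  {s | {k : Fin t | Significant s k}.ncard = i ∧
       ∀ k : Fin t, ¬ Significant s k → f0 s k ≤ 1}

/-- `Q_j*`: members of `Q_j` whose significant treatments are all strictly significant. -/
def QsetStar (a b t : ℕ) (j : ℕ) : Set (BlockArray a b t) :=
  {s | s ∈ Qset a b t j ∧ ∀ k : Fin t, Significant s k → StrictSignificant s k}

/-- Treatment `k` is connected in `s`. -/
def ConnectedIn (s : BlockArray a b t) (k : Fin t) : Prop :=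
  ∀ q r : Plot a b, s q = k → s r = k →
    Relation.ReflTransGen (fun u v => Neighbor u v ∧ s u = k ∧ s v = k) q r

/-!
Let `T` be the incidence matrix of `s` and `M` the adjacency matrix of the plots. Then `q_s(x)` is
the trace of `T B_t T' K`, where the kernel `K = (1 + x M) B_p (1 + x M)` does not depend on `s`.
If the plots carry distinct treatments except for one pair `{u, v}`, then
`T B_t T' = 1 + E_{uv} + E_{vu} - J / t`, so `s` enters only through `2 K u v`. For neighbors
`u, v`, `K u v = 2 x - (1 + x deg u) (1 + x deg v) / p`, because a grid has no triangles. For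
`x > 0` this is largest when the degrees are smallest, that is, when one of the two plots is a
corner.
-/

section Kernel

/-- The matrix `(1 + x M) W (1 + x M)`, against which the quadratic form `q_s(x)` pairs the
projected incidence matrix `T_s B_t T_s'` of an array. -/
def kernel (W : Matrix (Plot a b) (Plot a b) ℝ) (x : ℝ) : Matrix (Plot a b) (Plot a b) ℝ :=
  (1 + x • Mmat a b) * W * (1 + x • Mmat a b)

lemma neighbor_comm {q r : Plot a b} : Neighbor q r ↔ Neighbor r q := by
  simp only [Neighbor, eq_comm, or_comm]

lemma isSymm_Mmat : (Mmat a b).IsSymm := by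
  ext q r
  simp only [transpose_apply, Mmat, of_apply, neighbor_comm]

lemma isSymm_Bmat (n : Type*) [Fintype n] [DecidableEq n] : (Bmat n).IsSymm :=
  isSymm_one.sub (IsSymm.smul (show (Jmat n)ᵀ = Jmat n from rfl) _)

lemma isSymm_kernel {W : Matrix (Plot a b) (Plot a b) ℝ} (hW : W.IsSymm) (x : ℝ) :
    (kernel W x).IsSymm := by
  simp only [IsSymm, kernel, transpose_mul, transpose_add, transpose_one, transpose_smul,
    isSymm_Mmat.eq, hW.eq, Matrix.mul_assoc]

lemma trace_Bmat_mul_conj_Tmat (A : Matrix (Plot a b) (Plot a b) ℝ) (s : BlockArray a b t) :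
    trace (Bmat (Fin t) * ((Tmat s)ᵀ * A * Tmat s)) =
      trace (Tmat s * Bmat (Fin t) * (Tmat s)ᵀ * A) := by
  rw [← Matrix.mul_assoc, trace_mul_comm]
  simp only [Matrix.mul_assoc]

lemma qpoly_eq_trace {W : Matrix (Plot a b) (Plot a b) ℝ} (hW : W.IsSymm)
    (s : BlockArray a b t) (x : ℝ) :
    qpoly W s x = trace (Tmat s * Bmat (Fin t) * (Tmat s)ᵀ * kernel W x) := by
  set P := Tmat s * Bmat (Fin t) * (Tmat s)ᵀ with hP
  have hPsymm : Pᵀ = P := by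
    simp only [hP, transpose_mul, transpose_transpose, (isSymm_Bmat _).eq, Matrix.mul_assoc]
  have h00 : cs00 W s = trace (P * W) := trace_Bmat_mul_conj_Tmat W s
  have h01 : cs01 W s = trace (P * (W * Mmat a b)) := by
    rw [hP, ← trace_Bmat_mul_conj_Tmat, cs01, Cs01, Fmat]
    simp only [Matrix.mul_assoc]
  have h11 : cs11 W s = trace (P * (Mmat a b * W * Mmat a b)) := by
    rw [hP, ← trace_Bmat_mul_conj_Tmat, cs11, Cs11, Fmat, transpose_mul, isSymm_Mmat.eq]
    simp only [Matrix.mul_assoc]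
  have h10 : trace (P * (Mmat a b * W)) = trace (P * (W * Mmat a b)) := by
    rw [← trace_transpose, transpose_mul, transpose_mul, hW.eq, isSymm_Mmat.eq, hPsymm,
      trace_mul_comm]
  have hkernel : kernel W x =
      W + x • (Mmat a b * W) + x • (W * Mmat a b) + x ^ 2 • (Mmat a b * W * Mmat a b) := by
    simp only [kernel, add_mul, mul_add, one_mul, mul_one, Matrix.smul_mul, Matrix.mul_smul]
    module
  rw [qpoly, h00, h01, h11, hkernel]
  simp only [mul_add, Matrix.mul_smul, trace_add, trace_smul, h10, smul_eq_mul]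
  ring

end Kernel

section Collision

/-- `f` is injective except that it takes the same value at the two distinct points `u` and `v`.
The unordered pair `s(u, v)` keeps the notion symmetric in `u` and `v`. -/
def CollidesOnlyAt {α β : Type*} (f : α → β) (u v : α) : Prop :=
  u ≠ v ∧ ∀ q r, f q = f r ↔ q = r ∨ s(q, r) = s(u, v)

namespace CollidesOnlyAt

variable {α β : Type*} {f : α → β} {u v : α}

lemma symm (h : CollidesOnlyAt f u v) : CollidesOnlyAt f v u :=
  ⟨h.1.symm, fun q r => by rw [h.2, Sym2.eq_swap (a := u)]⟩

lemma apply_eq (h : CollidesOnlyAt f u v) : f u = f v := (h.2 u v).2 (Or.inr rfl)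

lemma fiber_eq_pair (h : CollidesOnlyAt f u v) : {q | f q = f u} = {u, v} := by
  ext q
  simp [h.2 q u, h.1]

lemma apply_eq_left_of_ne (h : CollidesOnlyAt f u v) {q r : α} (hqr : q ≠ r) (hf : f q = f r) :
    f q = f u := by
  rcases Sym2.eq_iff.1 (((h.2 q r).1 hf).resolve_left hqr) with ⟨rfl, -⟩ | ⟨rfl, -⟩
  exacts [rfl, h.apply_eq.symm]

end CollidesOnlyAt

lemma exists_collidesOnlyAt_of_ncard_range {α β : Type*} [Finite α] {f : α → β}
    (hf : (Set.range f).ncard + 1 = Nat.card α) : ∃ u v, CollidesOnlyAt f u v := by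
  have hnotInj : ¬ Function.Injective f := fun hinj => by
    rw [← Set.image_univ, Set.ncard_image_of_injective _ hinj, Set.ncard_univ] at hf
    omega
  obtain ⟨u, v, huv, hne⟩ := Function.not_injective_iff.1 hnotInj
  have himage : f '' {v}ᶜ = Set.range f := by
    refine (Set.image_subset_range f _).antisymm ?_
    rintro _ ⟨q, rfl⟩
    rcases eq_or_ne q v with rfl | hq
    exacts [⟨u, hne, huv⟩, ⟨q, hq, rfl⟩]
  have hinj : Set.InjOn f {v}ᶜ := by
    rw [← Set.ncard_image_iff, himage, Set.ncard_compl, Set.ncard_singleton]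
    omega
  refine ⟨u, v, hne, fun q r => ⟨fun hqr => ?_, ?_⟩⟩
  · refine or_iff_not_imp_left.2 fun hqr_ne => Sym2.eq_iff.2 ?_
    by_cases hq : q = v
    · subst hq
      exact Or.inr ⟨rfl, hinj (Ne.symm hqr_ne) hne (hqr.symm.trans huv.symm)⟩
    · by_cases hr : r = v
      · subst hr
        exact Or.inl ⟨hinj hq hne (hqr.trans huv.symm), rfl⟩
      · exact absurd (hinj hq hr hqr) hqr_ne
  · rintro (rfl | h)
    · rfl
    · rcases Sym2.eq_iff.1 h with ⟨rfl, rfl⟩ | ⟨rfl, rfl⟩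
      exacts [huv, huv.symm]

lemma Tmat_mul_Bmat_mul_transpose (s : BlockArray a b t) :
    Tmat s * Bmat (Fin t) * (Tmat s)ᵀ =
      of (fun q r => if s q = s r then 1 else 0) - (t : ℝ)⁻¹ • Jmat (Plot a b) := by
  ext q r
  simp [mul_apply, Tmat, Bmat, Jmat, one_apply]

lemma sameValue_eq_of_collidesOnlyAt {α β : Type*} [DecidableEq α] [DecidableEq β] {f : α → β}
    {u v : α} (h : CollidesOnlyAt f u v) :
    of (fun q r => if f q = f r then (1 : ℝ) else 0) = 1 + single u v 1 + single v u 1 := by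
  ext q r
  have hne := h.1
  simp only [of_apply, h.2 q r, Matrix.add_apply, one_apply, single_apply, Sym2.eq_iff]
  grind

lemma qpoly_eq_of_collidesOnlyAt {W : Matrix (Plot a b) (Plot a b) ℝ} (hW : W.IsSymm)
    {s : BlockArray a b t} {u v : Plot a b} (h : CollidesOnlyAt s u v) (x : ℝ) :
    qpoly W s x =
      trace ((1 - (t : ℝ)⁻¹ • Jmat (Plot a b)) * kernel W x) + 2 * kernel W x u v := by
  have hsymm : kernel W x v u = kernel W x u v := (isSymm_kernel hW x).apply u v
  rw [qpoly_eq_trace hW, Tmat_mul_Bmat_mul_transpose, sameValue_eq_of_collidesOnlyAt h]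
  simp only [sub_mul, add_mul, trace_sub, trace_add, trace_single_mul, one_smul, hsymm]
  ring

end Collision

section Grid

variable {V : Type*} [Fintype V] {G : SimpleGraph V} [DecidableRel G.Adj] {u v : V}

lemma one_add_smul_adjMatrix_mulVec_one_apply [DecidableEq V] (x : ℝ) (v : V) :
    ((1 + x • G.adjMatrix ℝ) *ᵥ 1) v = 1 + x * G.degree v := by
  simp [add_mulVec, smul_mulVec]

lemma adjMatrix_mul_self_apply_eq_zero (h : G.commonNeighbors u v = ∅) :
    (G.adjMatrix ℝ * G.adjMatrix ℝ) u v = 0 := by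
  rw [SimpleGraph.adjMatrix_mul_apply]
  refine Finset.sum_eq_zero fun w hw => ?_
  rw [SimpleGraph.adjMatrix_apply, if_neg]
  intro hwv
  exact h.subset ⟨(G.mem_neighborFinset u w).1 hw, hwv.symm⟩

lemma conj_Bmat_apply_of_adj [DecidableEq V] (hadj : G.Adj u v)
    (hcommon : G.commonNeighbors u v = ∅) (x : ℝ) :
    ((1 + x • G.adjMatrix ℝ) * Bmat V * (1 + x • G.adjMatrix ℝ)) u v =
      2 * x - (Fintype.card V : ℝ)⁻¹ * ((1 + x * G.degree u) * (1 + x * G.degree v)) := by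
  set N := 1 + x • G.adjMatrix ℝ with hN
  have hNsymm : Nᵀ = N := by
    rw [hN, transpose_add, transpose_one, transpose_smul, SimpleGraph.transpose_adjMatrix]
  have hsq : (N * N) u v = 2 * x := by
    have hexpand : N * N = 1 + (2 * x) • G.adjMatrix ℝ +
        x ^ 2 • (G.adjMatrix ℝ * G.adjMatrix ℝ) := by
      simp only [hN, add_mul, mul_add, one_mul, mul_one, Matrix.smul_mul, Matrix.mul_smul]
      module
    rw [hexpand, Matrix.add_apply, Matrix.add_apply, Matrix.smul_apply, Matrix.smul_apply,
      adjMatrix_mul_self_apply_eq_zero hcommon, SimpleGraph.adjMatrix_apply, if_pos hadj,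
      one_apply_ne hadj.ne]
    simp
  have hJ : (N * Jmat V * N) u v = (1 + x * G.degree u) * (1 + x * G.degree v) := by
    have hrankOne : Jmat V = vecMulVec 1 1 := by
      ext
      simp [Jmat, vecMulVec_apply]
    rw [hrankOne, mul_vecMulVec, vecMulVec_mul, vecMulVec_apply, ← mulVec_transpose, hNsymm, hN,
      one_add_smul_adjMatrix_mulVec_one_apply, one_add_smul_adjMatrix_mulVec_one_apply]
  rw [Bmat, mul_sub, sub_mul, mul_one, Matrix.mul_smul, Matrix.smul_mul, Matrix.sub_apply,
    Matrix.smul_apply, hsq, hJ, smul_eq_mul]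

end Grid

section Plots

/-- The grid graph on the plots; its adjacency relation is `Neighbor`. -/
abbrev plotGraph (a b : ℕ) : SimpleGraph (Plot a b) :=
  SimpleGraph.pathGraph a □ SimpleGraph.pathGraph b

lemma plotGraph_adj {q r : Plot a b} : (plotGraph a b).Adj q r ↔ Neighbor q r := by
  simp only [SimpleGraph.boxProd_adj, SimpleGraph.pathGraph_adj, Neighbor]
  tauto

instance : DecidableRel (plotGraph a b).Adj := fun _ _ => decidable_of_iff _ plotGraph_adj.symm

lemma Mmat_eq_adjMatrix : Mmat a b = (plotGraph a b).adjMatrix ℝ := by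
  ext q r
  simp only [Mmat, of_apply, SimpleGraph.adjMatrix_apply, plotGraph_adj]

lemma commonNeighbors_plotGraph_eq_empty {u v : Plot a b} (h : Neighbor u v) :
    (plotGraph a b).commonNeighbors u v = ∅ := by
  refine Set.eq_empty_of_forall_notMem fun w hw => ?_
  obtain ⟨huw, hvw⟩ := hw
  rw [SimpleGraph.mem_neighborSet, plotGraph_adj] at huw hvw
  unfold Neighbor at h huw hvw
  omega

lemma kernel_Bmat_apply_of_neighbor {u v : Plot a b} (h : Neighbor u v) (x : ℝ) :
    kernel (Bmat (Plot a b)) x u v = 2 * x - (Fintype.card (Plot a b) : ℝ)⁻¹ *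
      ((1 + x * (plotGraph a b).degree u) * (1 + x * (plotGraph a b).degree v)) := by
  rw [kernel, Mmat_eq_adjMatrix]
  exact conj_Bmat_apply_of_adj (plotGraph_adj.2 h) (commonNeighbors_plotGraph_eq_empty h) x

lemma degree_pathGraph {n : ℕ} (i : Fin n) [Fintype ((SimpleGraph.pathGraph n).neighborSet i)] :
    (SimpleGraph.pathGraph n).degree i =
      (if 1 < n then 1 else 0) + if i.val = 0 ∨ i.val + 1 = n then 0 else 1 := by
  have hcard (s : Finset (Fin n)) (hs : ∀ j : Fin n, j ∈ s ↔ i.val + 1 = j ∨ j.val + 1 = i) :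
      (SimpleGraph.pathGraph n).degree i = s.card := by
    rw [← SimpleGraph.card_neighborFinset_eq_degree]
    congr 1
    ext j
    rw [SimpleGraph.mem_neighborFinset, SimpleGraph.pathGraph_adj, hs]
  have hi := i.isLt
  by_cases hfirst : i.val = 0 <;> by_cases hlast : i.val + 1 = n
  · rw [hcard ∅ (fun j => by simp only [Finset.notMem_empty, false_iff]; omega)]
    grind
  · rw [hcard {⟨i + 1, by omega⟩} (fun j => by
        simp only [Finset.mem_singleton, Fin.ext_iff]
        omega)]
    grind
  · rw [hcard {⟨i - 1, by omega⟩} (fun j => by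
        simp only [Finset.mem_singleton, Fin.ext_iff]
        omega)]
    grind
  · rw [hcard {⟨i - 1, by omega⟩, ⟨i + 1, by omega⟩} (fun j => by
        simp only [Finset.mem_insert, Finset.mem_singleton, Fin.ext_iff]
        omega), Finset.card_pair (by simp [Fin.ext_iff])]
    grind

lemma degree_plotGraph (q : Plot a b) : (plotGraph a b).degree q =
    ((if 1 < a then 1 else 0) + if q.1.val = 0 ∨ q.1.val + 1 = a then 0 else 1) +
      ((if 1 < b then 1 else 0) + if q.2.val = 0 ∨ q.2.val + 1 = b then 0 else 1) := by
  classical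
  rw [SimpleGraph.degree_boxProd, degree_pathGraph, degree_pathGraph]

lemma degree_lt_degree_of_isCorner {u v : Plot a b} (hu : IsCorner u) (hv : ¬ IsCorner v) :
    (plotGraph a b).degree u < (plotGraph a b).degree v := by
  unfold IsCorner at hu hv
  rw [degree_plotGraph, degree_plotGraph, if_pos hu.1, if_pos hu.2]
  grind

lemma degree_le_degree_of_neighbor_isCorner {u v w : Plot a b} (hu : IsCorner u)
    (huv : Neighbor u v) (hw : ¬ IsCorner w) :
    (plotGraph a b).degree v ≤ (plotGraph a b).degree w := by
  unfold IsCorner at hu hw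
  rw [degree_plotGraph, degree_plotGraph]
  rcases huv with ⟨hrow, -⟩ | ⟨hcol, -⟩
  · rw [← hrow, if_pos hu.1]
    grind
  · rw [← hcol, if_pos hu.2]
    grind

lemma kernel_Bmat_apply_lt_of_isCorner {u v u' v' : Plot a b} (huv : Neighbor u v)
    (hu : ¬ IsCorner u) (hv : ¬ IsCorner v) (huv' : Neighbor u' v') (hu' : IsCorner u')
    {x : ℝ} (hx : 0 < x) :
    kernel (Bmat (Plot a b)) x u v < kernel (Bmat (Plot a b)) x u' v' := by
  have hdu : ((plotGraph a b).degree u' : ℝ) < (plotGraph a b).degree u := by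
    exact_mod_cast degree_lt_degree_of_isCorner hu' hu
  have hdv : ((plotGraph a b).degree v' : ℝ) ≤ (plotGraph a b).degree v := by
    exact_mod_cast degree_le_degree_of_neighbor_isCorner hu' huv' hv
  have hcard : (0 : ℝ) < Fintype.card (Plot a b) := by
    exact_mod_cast Fintype.card_pos_iff.2 ⟨u⟩
  rw [kernel_Bmat_apply_of_neighbor huv, kernel_Bmat_apply_of_neighbor huv']
  have hprod : (1 + x * (plotGraph a b).degree u') * (1 + x * (plotGraph a b).degree v') <
      (1 + x * (plotGraph a b).degree u) * (1 + x * (plotGraph a b).degree v) :=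
    mul_lt_mul (by gcongr) (by gcongr) (by positivity) (by positivity)
  gcongr

end Plots

section UniqueSignificant

lemma mem_Qset_one_of_collidesOnlyAt {s : BlockArray a b t} {u v : Plot a b}
    (hcol : CollidesOnlyAt s u v) (huv : Neighbor u v) (hu : IsCorner u) :
    s ∈ Qset a b t 1 := by
  have hsig : Significant s (s u) := ⟨u, v, hcol.1, hcol.fiber_eq_pair, huv, Or.inl hu⟩
  constructor
  · refine Set.ncard_eq_one.2 ⟨s u, Set.eq_singleton_iff_unique_mem.2 ⟨hsig, ?_⟩⟩
    rintro k ⟨q, r, hqr, hfiber, -⟩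
    obtain ⟨hq, hr⟩ : s q = k ∧ s r = k :=
      ⟨hfiber.superset (Or.inl rfl), hfiber.superset (Or.inr rfl)⟩
    exact hq ▸ hcol.apply_eq_left_of_ne hqr (hq.trans hr.symm)
  · intro k hk
    refine (Set.ncard_le_one).2 fun q hq r hr => by_contra fun hqr => hk ?_
    have hqu : s q = s u := hcol.apply_eq_left_of_ne hqr (Eq.trans hq (Eq.symm hr))
    rwa [← show s q = k from hq, hqu]

lemma exists_collidesOnlyAt_of_mem_Qset_one {s : BlockArray a b t} (hs : s ∈ Qset a b t 1) :
    ∃ u v, CollidesOnlyAt s u v ∧ Neighbor u v ∧ IsCorner u := by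
  obtain ⟨hone, hrest⟩ := hs
  obtain ⟨k, hk⟩ := Set.ncard_eq_one.1 hone
  obtain ⟨u, v, hne, hfiber, huv, hcorner⟩ : Significant s k := hk.superset rfl
  have hmem (q : Plot a b) : s q = k ↔ q = u ∨ q = v := Set.ext_iff.1 hfiber q
  have hcol : CollidesOnlyAt s u v := by
    refine ⟨hne, fun q r => ⟨fun hqr => or_iff_not_imp_left.2 fun hne' => ?_, ?_⟩⟩
    · have hsig : Significant s (s q) := by
        by_contra hsig
        exact hne' ((Set.ncard_le_one).1 (hrest _ hsig) q rfl r hqr.symm)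
      have hqk : s q = k := hk.subset hsig
      have hq := (hmem q).1 hqk
      have hr := (hmem r).1 (hqr ▸ hqk)
      rw [Sym2.eq_iff]
      grind
    · rw [Sym2.eq_iff]
      grind
  rcases hcorner with hu | hv
  exacts [⟨u, v, hcol, huv, hu⟩, ⟨v, u, hcol.symm, neighbor_comm.1 huv, hv⟩]

lemma neighbor_of_connectedIn {s : BlockArray a b t} {u v : Plot a b}
    (hcol : CollidesOnlyAt s u v) (hconn : ConnectedIn s (s u)) : Neighbor u v := by
  obtain heq | ⟨w, ⟨huw, -, hw⟩, -⟩ := (hconn u v rfl hcol.apply_eq.symm).cases_head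
  · exact absurd heq hcol.1
  · obtain rfl | rfl : w = u ∨ w = v := hcol.fiber_eq_pair.subset hw
    · exact absurd rfl (plotGraph_adj.2 huw).ne
    · exact huw

end UniqueSignificant

section CriticalPoint

lemma eta_mul_sub_eq (ha : a ≠ 0) (hb : b ≠ 0) (ht : t ≠ 0) :
    eta a b t * ((a : ℝ) * b) - (16 * ((a : ℝ) * b) - 14 * a - 14 * b + 20) =
      (t * ((a * b : ℝ) * (4 * (a * b) - 2 * (a + b) - 16) + 14 * (a + b) - 20)
        + 4 * (2 * (a * b) - a - b) ^ 2
        - 2 * (a * b : ℝ) * (8 * (a * b) - 7 * a - 7 * b + 4)) / t := by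
  unfold eta
  field_simp
  ring

lemma eta_mul_sub_pos (ha : 3 ≤ a) (hb : 3 ≤ b) (ht : t + 1 = a * b) :
    0 < eta a b t * ((a : ℝ) * b) - (16 * ((a : ℝ) * b) - 14 * a - 14 * b + 20) := by
  have htne : t ≠ 0 := by rintro rfl; nlinarith
  rw [eta_mul_sub_eq (by omega) (by omega) htne]
  have hA : (3 : ℝ) ≤ a := by exact_mod_cast ha
  have hB : (3 : ℝ) ≤ b := by exact_mod_cast hb
  have hT : (t : ℝ) = a * b - 1 := by rw [eq_sub_iff_add_eq]; exact_mod_cast ht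
  refine div_pos ?_ (by positivity)
  rw [hT]
  set p : ℝ := (a : ℝ) * b
  set σ : ℝ := (a : ℝ) + b with hσ
  have hpσ : 3 * σ - 9 ≤ p := by nlinarith
  have hfactor : 8 * p ≤ p * (4 * p - 2 * σ - 16) := by nlinarith
  have hmain : (p - 1) * (8 * p + 14 * σ - 20) ≤
      (p - 1) * (p * (4 * p - 2 * σ - 16) + 14 * σ - 20) := by
    refine mul_le_mul_of_nonneg_left ?_ ?_ <;> linarith
  have hrest : 4 * (2 * p - a - b) ^ 2 - 2 * p * (8 * p - 7 * a - 7 * b + 4) =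
      4 * σ ^ 2 - 2 * σ * p - 8 * p := by
    rw [hσ]
    ring
  rw [add_sub_assoc, hrest]
  nlinarith [hmain, hpσ]

lemma xstar_pos (ha : 3 ≤ a) (hb : 3 ≤ b) (ht : t + 1 = a * b) :
    0 < (((a : ℝ) * b) - ((a : ℝ) + b - 5 / 2)) /
      (eta a b t * ((a : ℝ) * b) - (16 * ((a : ℝ) * b) - 14 * a - 14 * b + 20)) := by
  refine div_pos ?_ (eta_mul_sub_pos ha hb ht)
  have hA : (3 : ℝ) ≤ a := by exact_mod_cast ha
  have hB : (3 : ℝ) ≤ b := by exact_mod_cast hb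
  nlinarith

end CriticalPoint

theorem connected_not_Q1_beaten_general {x : ℝ} (hx : 0 < x) {s sstar : BlockArray a b t}
    (hdist : (Set.range s).ncard + 1 = a * b) (hconn : ∀ k : Fin t, ConnectedIn s k)
    (hnot : s ∉ Qset a b t 1) (hstar : sstar ∈ Qset a b t 1) :
    qpoly (Bmat (Plot a b)) s x < qpoly (Bmat (Plot a b)) sstar x := by
  obtain ⟨u, v, hcol⟩ := exists_collidesOnlyAt_of_ncard_range (f := s) (by simpa using hdist)
  have huv : Neighbor u v := neighbor_of_connectedIn hcol (hconn _)
  have hu : ¬ IsCorner u := fun hu => hnot (mem_Qset_one_of_collidesOnlyAt hcol huv hu)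
  have hv : ¬ IsCorner v := fun hv =>
    hnot (mem_Qset_one_of_collidesOnlyAt hcol.symm (neighbor_comm.1 huv) hv)
  obtain ⟨u', v', hcol', huv', hu'⟩ := exists_collidesOnlyAt_of_mem_Qset_one hstar
  have hkernel := kernel_Bmat_apply_lt_of_isCorner huv hu hv huv' hu' hx
  rw [qpoly_eq_of_collidesOnlyAt (isSymm_Bmat _) hcol,
    qpoly_eq_of_collidesOnlyAt (isSymm_Bmat _) hcol']
  gcongr

/-- Lemma `lemma 33`: for `t = p − 1` and `a ≥ 3`, any array with all
`p − 1` treatments occurring and all treatments connected which is not in `Q₁` is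
strictly beaten at `x*` by any array of `Q₁`. -/
theorem connected_not_Q1_beaten
    (a b t : ℕ) (ha : 3 ≤ a) (hab : a ≤ b) (ht : t + 1 = a * b)
    (xstar : ℝ)
    (hx : xstar = (((a : ℝ) * b) - ((a : ℝ) + b - 5 / 2)) /
        (eta a b t * ((a : ℝ) * b) - (16 * ((a : ℝ) * b) - 14 * a - 14 * b + 20)))
    (s sstar : BlockArray a b t)
    (hdist : {k : Fin t | ∃ q : Plot a b, s q = k}.ncard = a * b - 1)
    (hconn : ∀ k : Fin t, ConnectedIn s k)
    (hnot : s ∉ Qset a b t 1)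
    (hstar : sstar ∈ Qset a b t 1) :
    qpoly (Bmat (Plot a b)) s xstar < qpoly (Bmat (Plot a b)) sstar xstar :=
  connected_not_Q1_beaten_general (hx ▸ xstar_pos ha (ha.trans hab) ht)
    (by rw [← ht]; exact congrArg (· + 1) (hdist.trans (by omega))) hconn hnot hstar

end TwoDim
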